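/- For integers $m \ge 0$, $n \ge 0$ and $0 \le \ell \le n$ with $\ell + n$ even, the connection coefficient $c_{\ell,n}^m = (2\ell+2m+1)(2m+2)\sqrt{\frac{(\ell+2m)!}{(\ell+m+\frac{1}{2})\,\ell!}\cdot\frac{(n+m+\frac{5}{2})\,n!}{(n+2m+4)!}}$ satisfies $c_{\ell,n}^m = \frac{\langle \tilde P_{\ell+m}^m, (1-x^2)\, \tilde P_{n+m+2}^{m+2} \cdot (1-x^2)^{-1} \rangle}{\langle \tilde P_{\ell+m}^m, \tilde P_{\ell+m}^m\rangle}$, i.e. it is the coefficient of $\tilde P_{\ell+m}^m$ in the expansion of $\tilde P_{n+m+2}^{m+2}$ in the basis $\{\tilde P_{\ell+m}^m\}_{\ell \ge 0}$ on $L^2([-1,1], dx)$. -/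

import Mathlib

open scoped Nat

/-- The associated Legendre function `P_ℓ^m` (Condon–Shortley phase), defined via the
Rodrigues formula `P_ℓ(x) = 1/(2^ℓ ℓ!) dℓ/dxℓ (x²-1)^ℓ` and
`P_ℓ^m(x) = (-1)^m (1-x²)^{m/2} dm/dxm P_ℓ(x)`. -/
noncomputable def assocLegendre (ℓ m : ℕ) (x : ℝ) : ℝ :=
  (-1 : ℝ) ^ m * (1 - x ^ 2) ^ ((m : ℝ) / 2) *
    iteratedDeriv m
      (fun y : ℝ => (1 / (2 ^ ℓ * (ℓ ! : ℝ))) *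
        iteratedDeriv ℓ (fun t : ℝ => (t ^ 2 - 1) ^ ℓ) y) x

/-- The normalized associated Legendre function `P̃_ℓ^m`, orthonormal in
`L²([-1,1], dx)` for fixed `m ≥ 0`; here `i^{m+|m|} = (-1)^m`. -/
noncomputable def tildeP (ℓ m : ℕ) (x : ℝ) : ℝ :=
  (-1 : ℝ) ^ m * Real.sqrt (((ℓ : ℝ) + 1 / 2) * ((ℓ - m)! : ℝ) / ((ℓ + m)! : ℝ)) *
    assocLegendre ℓ m x

/-!
Write `w = 1 - x²` and `D = d/dx`. Up to normalization, the inner product of `P̃_{ℓ+m}^m` and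
`P̃_{n+m+2}^{m+2}` is `∫ w^{m+1} p D^{m+2} P_{n+m+2}` with `p = D^m P_{ℓ+m}`, a polynomial of degree
at most `ℓ`. The weight absorbs the boundary terms of the first `m + 1` integrations by parts. One
more produces boundary terms at `±1`, and the integral it leaves pairs `P_{n+m+2}` with a polynomial
of lower degree, hence vanishes. So only values at `±1` survive, and those are explicit: the Taylor
expansion of `(x - 1)^N (x + 1)^N` at `±1` gives the values of `D^m P_N`, and their parity is the
source of the factor `1 + (-1)^{ℓ+n}`.

The norm of `P̃_N^m` also comes from integration by parts: `∫ w^m (D^m P_N)²` is, up to sign,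
`∫ D^m (w^m D^m P_N) P_N`, in which the first factor matters only through its coefficient of `x^N`,
and `∫ P_N²` follows from `∫ D (x P_N²) = 2` because `x D P_N` and `N P_N` have the same
coefficient of `x^N`.
-/

namespace LegendreConnection

open Polynomial

lemma eval_iterate_derivative_eq_factorial_mul_coeff_taylor {R : Type*} [Semiring R] (a : R) (k : ℕ)
    (p : R[X]) : (derivative^[k] p).eval a = k ! * (taylor a p).coeff k := by
  rw [← factorial_smul_hasseDeriv, taylor_coeff, LinearMap.smul_apply, nsmul_eq_mul,
    eval_natCast_mul]

section CommRing

variable {R : Type*} [CommRing R]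

lemma eval_iterate_derivative_X_sub_C_pow_mul (a : R) (n k : ℕ) (q : R[X]) :
    (derivative^[k + n] ((X - C a) ^ n * q)).eval a =
      (k + n).descFactorial n * (derivative^[k] q).eval a := by
  have htaylor : taylor a ((X - C a) ^ n * q) = X ^ n * taylor a q := by
    simp only [taylor_mul, taylor_pow, map_sub, taylor_X, taylor_C, add_sub_cancel_right]
  have hfactorial := Nat.factorial_mul_descFactorial (Nat.le_add_left n k)
  rw [Nat.add_sub_cancel] at hfactorial
  rw [eval_iterate_derivative_eq_factorial_mul_coeff_taylor, htaylor, coeff_X_pow_mul,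
    eval_iterate_derivative_eq_factorial_mul_coeff_taylor, ← hfactorial]
  push_cast
  ring

lemma natDegree_one_sub_X_sq_pow_le (m : ℕ) : ((1 - X ^ 2 : R[X]) ^ m).natDegree ≤ 2 * m := by
  rw [mul_comm]
  exact natDegree_pow_le_of_le m (by compute_degree)

lemma coeff_one_sub_X_sq_pow (m : ℕ) : ((1 - X ^ 2 : R[X]) ^ m).coeff (2 * m) = (-1) ^ m := by
  rw [mul_comm, coeff_pow_of_natDegree_le (by compute_degree)]
  simp [coeff_one]

lemma natDegree_iterate_derivative_weight_mul_le {k m : ℕ} {q : R[X]} (hq : q.natDegree ≤ k) :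
    (derivative^[m] ((1 - X ^ 2) ^ m * q)).natDegree ≤ k + m := by
  have hderiv := natDegree_iterate_derivative ((1 - X ^ 2) ^ m * q) m
  have hmul := natDegree_mul_le_of_le (natDegree_one_sub_X_sq_pow_le (R := R) m) hq
  omega

lemma coeff_iterate_derivative_weight_mul {k m : ℕ} {q : R[X]} (hq : q.natDegree ≤ k) :
    (derivative^[m] ((1 - X ^ 2) ^ m * q)).coeff (k + m) =
      (k + 2 * m).descFactorial m * ((-1) ^ m * q.coeff k) := by
  rw [coeff_iterate_derivative, nsmul_eq_mul, show k + m + m = 2 * m + k by ring,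
    coeff_mul_add_eq_of_natDegree_le (natDegree_one_sub_X_sq_pow_le m) hq, coeff_one_sub_X_sq_pow,
    add_comm k]

lemma eval_iterate_derivative_weight_mul {ε : R} (hε : ε ^ 2 = 1) (k : ℕ) (p : R[X]) :
    (derivative^[k] ((1 - X ^ 2) ^ k * p)).eval ε = k ! * ((-2 * ε) ^ k * p.eval ε) := by
  have hC : (C ε : R[X]) ^ 2 = 1 := by rw [← C_pow, hε, C_1]
  have hfactor : (1 - X ^ 2 : R[X]) = (X - C ε) * -(X + C ε) := by linear_combination -hC
  have h := eval_iterate_derivative_X_sub_C_pow_mul ε k 0 ((-(X + C ε)) ^ k * p)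
  rw [zero_add, Nat.descFactorial_self, ← mul_assoc, ← mul_pow, ← hfactor] at h
  rw [h, Function.iterate_zero_apply, eval_mul, eval_pow, eval_neg, eval_add, eval_X, eval_C]
  ring

end CommRing

lemma iteratedDeriv_eval {𝕜 : Type*} [NontriviallyNormedField 𝕜] (k : ℕ) (p : 𝕜[X]) :
    iteratedDeriv k (fun x => p.eval x) = fun x => (derivative^[k] p).eval x := by
  induction k generalizing p with
  | zero => simp
  | succ k ih =>
    rw [iteratedDeriv_succ', Function.iterate_succ_apply, ← ih]
    congr 1
    ext x
    exact p.deriv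

/-- Integration of real polynomials over `[-1, 1]`, as a linear functional. -/
noncomputable def polyIntegral : ℝ[X] →ₗ[ℝ] ℝ where
  toFun f := ∫ x in (-1 : ℝ)..1, f.eval x
  map_add' f g := by
    simp only [eval_add]
    exact intervalIntegral.integral_add (f.continuous.intervalIntegrable _ _)
      (g.continuous.intervalIntegrable _ _)
  map_smul' c f := by simp

lemma polyIntegral_apply (f : ℝ[X]) : polyIntegral f = ∫ x in (-1 : ℝ)..1, f.eval x := rfl

lemma polyIntegral_C_mul (c : ℝ) (f : ℝ[X]) : polyIntegral (C c * f) = c * polyIntegral f := by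
  rw [← smul_eq_C_mul, map_smul, smul_eq_mul]

lemma polyIntegral_derivative (f : ℝ[X]) :
    polyIntegral (derivative f) = f.eval 1 - f.eval (-1) :=
  intervalIntegral.integral_eq_sub_of_hasDerivAt (fun x _ => f.hasDerivAt x)
    ((derivative f).continuous.intervalIntegrable _ _)

lemma polyIntegral_mul_derivative (f g : ℝ[X]) :
    polyIntegral (f * derivative g) =
      f.eval 1 * g.eval 1 - f.eval (-1) * g.eval (-1) - polyIntegral (derivative f * g) := by
  have h := polyIntegral_derivative (f * g)
  rw [derivative_mul, map_add, eval_mul, eval_mul] at h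
  linear_combination h

lemma polyIntegral_mul_iterate_derivative (k : ℕ) {f : ℝ[X]} (hf : (1 - X ^ 2) ^ k ∣ f)
    (g : ℝ[X]) :
    polyIntegral (f * derivative^[k] g) = (-1) ^ k * polyIntegral (derivative^[k] f * g) := by
  induction k generalizing f with
  | zero => simp
  | succ k ih =>
    obtain ⟨c, hc⟩ := (dvd_pow_self _ k.succ_ne_zero).trans hf
    have hone : f.eval 1 = 0 := by simp [hc]
    have hneg : f.eval (-1) = 0 := by simp [hc]
    rw [Function.iterate_succ_apply', Function.iterate_succ_apply, polyIntegral_mul_derivative,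
      hone, hneg, ih (by simpa using pow_sub_one_dvd_derivative_of_pow_dvd hf)]
    ring

/-- The Legendre polynomial `P_N`, given by the Rodrigues formula. -/
noncomputable def legendrePoly (N : ℕ) : ℝ[X] :=
  C (1 / (2 ^ N * (N ! : ℝ))) * derivative^[N] ((X ^ 2 - 1) ^ N)

lemma natDegree_legendrePoly_le (N : ℕ) : (legendrePoly N).natDegree ≤ N := by
  have hderiv := natDegree_iterate_derivative ((X ^ 2 - 1 : ℝ[X]) ^ N) N
  have hpow : ((X ^ 2 - 1 : ℝ[X]) ^ N).natDegree ≤ N * 2 :=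
    natDegree_pow_le_of_le N (by compute_degree)
  exact (natDegree_C_mul_le _ _).trans (by omega)

lemma natDegree_iterate_derivative_legendrePoly_le (k m : ℕ) :
    (derivative^[m] (legendrePoly (k + m))).natDegree ≤ k := by
  have hderiv := natDegree_iterate_derivative (legendrePoly (k + m)) m
  have hdegree := natDegree_legendrePoly_le (k + m)
  omega

lemma eval_iterate_derivative_legendrePoly {ε : ℝ} (hε : ε ^ 2 = 1) (k m : ℕ) :
    (derivative^[m] (legendrePoly (k + m))).eval ε =
      ε ^ k * ((k + 2 * m)! / (2 ^ m * m ! * k !)) := by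
  have hC : C ε ^ 2 = 1 := by rw [← C_pow, hε, C_1]
  have hfactor : (X ^ 2 - 1 : ℝ[X]) = (X - C ε) * (X + C ε) := by linear_combination hC
  have houter := Nat.factorial_mul_descFactorial (Nat.le_add_left (k + m) m)
  have hinner := Nat.factorial_mul_descFactorial (Nat.le_add_left m k)
  rw [Nat.add_sub_cancel, show m + (k + m) = k + 2 * m by ring] at houter
  rw [Nat.add_sub_cancel] at hinner
  rw [legendrePoly, iterate_derivative_C_mul, ← Function.iterate_add_apply, hfactor, mul_pow,
    eval_mul, eval_C, eval_iterate_derivative_X_sub_C_pow_mul, iterate_derivative_X_add_pow,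
    Nat.add_sub_cancel, show m + (k + m) = k + 2 * m by ring, ← houter, ← hinner]
  simp only [nsmul_eq_mul, eval_mul, eval_natCast, eval_pow, eval_add, eval_X, eval_C]
  push_cast
  field_simp
  ring

lemma eval_legendrePoly {ε : ℝ} (hε : ε ^ 2 = 1) (N : ℕ) : (legendrePoly N).eval ε = ε ^ N := by
  simpa [Nat.factorial_ne_zero] using eval_iterate_derivative_legendrePoly hε N 0

lemma polyIntegral_mul_legendrePoly_eq_zero {N : ℕ} {s : ℝ[X]} (hs : s.degree < N) :
    polyIntegral (s * legendrePoly N) = 0 := by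
  have hdvd : (1 - X ^ 2 : ℝ[X]) ^ N ∣ (X ^ 2 - 1) ^ N :=
    pow_dvd_pow_of_dvd ⟨-1, by ring⟩ N
  have h := polyIntegral_mul_iterate_derivative N hdvd s
  rw [iterate_derivative_eq_zero_of_degree_lt hs, mul_zero, map_zero, eq_comm,
    mul_eq_zero_iff_left (pow_ne_zero N (by norm_num))] at h
  rw [legendrePoly, mul_left_comm, mul_comm s, polyIntegral_C_mul, h, mul_zero]

lemma polyIntegral_mul_legendrePoly_congr {N : ℕ} {s t : ℝ[X]} (hs : s.natDegree ≤ N)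
    (ht : t.natDegree ≤ N) (hcoeff : s.coeff N = t.coeff N) :
    polyIntegral (s * legendrePoly N) = polyIntegral (t * legendrePoly N) := by
  rw [← sub_eq_zero, ← map_sub, ← sub_mul]
  refine polyIntegral_mul_legendrePoly_eq_zero ((degree_lt_iff_coeff_zero _ _).mpr fun j hj => ?_)
  rw [coeff_sub, sub_eq_zero]
  rcases hj.eq_or_lt with rfl | hj
  · exact hcoeff
  · rw [coeff_eq_zero_of_natDegree_lt (hs.trans_lt hj),
      coeff_eq_zero_of_natDegree_lt (ht.trans_lt hj)]

lemma polyIntegral_derivative_mul_legendrePoly {N : ℕ} {s : ℝ[X]} (hs : s.natDegree ≤ N) :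
    polyIntegral (derivative s * legendrePoly N) = 0 := by
  refine polyIntegral_mul_legendrePoly_eq_zero ((degree_lt_iff_coeff_zero _ _).mpr fun j hj => ?_)
  rw [coeff_derivative, coeff_eq_zero_of_natDegree_lt (by omega), zero_mul]

lemma polyIntegral_legendrePoly_mul_self (N : ℕ) :
    polyIntegral (legendrePoly N * legendrePoly N) = 2 / (2 * N + 1) := by
  set P := legendrePoly N with hP
  have hdegree : P.natDegree ≤ N := natDegree_legendrePoly_le N
  have heuler : polyIntegral (X * derivative P * P) = N * polyIntegral (P * P) := by
    rw [← polyIntegral_C_mul, ← mul_assoc]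
    refine polyIntegral_mul_legendrePoly_congr ?_ ((natDegree_C_mul_le _ _).trans hdegree) ?_
    · rcases N with _ | N
      · simp [derivative_of_natDegree_zero (Nat.le_zero.mp hdegree)]
      · have hderiv := natDegree_derivative_le P
        exact (natDegree_mul_le_of_le natDegree_X_le hderiv).trans (by omega)
    · rcases N with _ | N
      · simp
      · rw [coeff_X_mul, coeff_derivative, coeff_C_mul]
        push_cast
        ring
  have hparts := polyIntegral_mul_derivative (X * P) P
  have hone : P.eval 1 = 1 := by rw [hP, eval_legendrePoly (by norm_num), one_pow]
  have hneg : P.eval (-1) * P.eval (-1) = 1 := by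
    rw [hP, eval_legendrePoly (by norm_num), ← mul_pow]
    norm_num
  rw [derivative_mul, derivative_X, one_mul, add_mul, map_add, mul_right_comm X P, heuler,
    eval_mul, eval_mul, eval_X, eval_X, hone] at hparts
  rw [eq_div_iff (by positivity)]
  linear_combination hparts + hneg

lemma polyIntegral_weight_mul_iterate_derivative_legendrePoly_sq (k m : ℕ) :
    polyIntegral ((1 - X ^ 2) ^ m * derivative^[m] (legendrePoly (k + m)) *
        derivative^[m] (legendrePoly (k + m))) =
      (k + 2 * m)! / k ! * (2 / (2 * (k + m) + 1)) := by
  set P := legendrePoly (k + m)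
  have hq : (derivative^[m] P).natDegree ≤ k := natDegree_iterate_derivative_legendrePoly_le k m
  have hcoeff : (derivative^[m] ((1 - X ^ 2) ^ m * derivative^[m] P)).coeff (k + m) =
      (C ((-1) ^ m * ((k + 2 * m)! / k ! : ℝ)) * P).coeff (k + m) := by
    have houter := Nat.factorial_mul_descFactorial (show m ≤ k + 2 * m by omega)
    have hinner := Nat.factorial_mul_descFactorial (Nat.le_add_left m k)
    rw [show k + 2 * m - m = k + m by omega] at houter
    rw [Nat.add_sub_cancel] at hinner
    rw [coeff_iterate_derivative_weight_mul hq, coeff_iterate_derivative, coeff_C_mul, ← houter,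
      ← hinner, nsmul_eq_mul]
    push_cast
    field_simp
  rw [polyIntegral_mul_iterate_derivative m (Dvd.intro _ rfl),
    polyIntegral_mul_legendrePoly_congr (natDegree_iterate_derivative_weight_mul_le hq)
      ((natDegree_C_mul_le _ _).trans (natDegree_legendrePoly_le _)) hcoeff,
    mul_assoc, polyIntegral_C_mul, polyIntegral_legendrePoly_mul_self, ← mul_assoc, ← mul_assoc,
    ← mul_pow]
  push_cast
  norm_num

lemma polyIntegral_weight_mul_iterate_derivative_succ_legendrePoly {n : ℕ} (k : ℕ) {p : ℝ[X]}
    (hp : p.natDegree ≤ n) :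
    polyIntegral ((1 - X ^ 2) ^ k * p * derivative^[k + 1] (legendrePoly (n + k))) =
      2 ^ k * k ! * (p.eval 1 - (-1) ^ n * p.eval (-1)) := by
  have hone : (1 : ℝ) ^ 2 = 1 := one_pow 2
  have hneg : (-1 : ℝ) ^ 2 = 1 := neg_one_sq
  have hsign : ((-1 : ℝ) ^ k) * (-1) ^ k = 1 := by rw [← mul_pow]; norm_num
  rw [Function.iterate_succ_apply, polyIntegral_mul_iterate_derivative k (Dvd.intro _ rfl),
    polyIntegral_mul_derivative, polyIntegral_derivative_mul_legendrePoly
      (natDegree_iterate_derivative_weight_mul_le hp),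
    eval_iterate_derivative_weight_mul hone, eval_iterate_derivative_weight_mul hneg,
    eval_legendrePoly hone, eval_legendrePoly hneg]
  simp only [mul_one, mul_neg, neg_neg, neg_pow (2 : ℝ), one_pow, pow_add]
  linear_combination (2 ^ k * k ! * (p.eval 1 - (-1) ^ n * p.eval (-1))) * hsign

lemma polyIntegral_weight_succ_mul_iterate_derivative_add_two {m n ℓ : ℕ} (hln : ℓ ≤ n + 1) :
    polyIntegral ((1 - X ^ 2) ^ (m + 1) * derivative^[m] (legendrePoly (ℓ + m)) *
        derivative^[m + 2] (legendrePoly (n + m + 2))) =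
      (1 + (-1) ^ (ℓ + n)) * (2 * m + 2) * ((ℓ + 2 * m)! / ℓ !) := by
  rw [show n + m + 2 = n + 1 + (m + 1) by ring,
    polyIntegral_weight_mul_iterate_derivative_succ_legendrePoly (m + 1)
      ((natDegree_iterate_derivative_legendrePoly_le ℓ m).trans hln),
    eval_iterate_derivative_legendrePoly (one_pow 2),
    eval_iterate_derivative_legendrePoly neg_one_sq, Nat.factorial_succ]
  push_cast
  field_simp
  ring

lemma assocLegendre_eq (N m : ℕ) (x : ℝ) :
    assocLegendre N m x = (-1) ^ m * (1 - x ^ 2) ^ ((m : ℝ) / 2) *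
      (derivative^[m] (legendrePoly N)).eval x := by
  have hpow := iteratedDeriv_eval N ((X ^ 2 - 1 : ℝ[X]) ^ N)
  have hlegendre := iteratedDeriv_eval m (legendrePoly N)
  simp only [eval_pow, eval_sub, eval_X, eval_one] at hpow
  simp only [legendrePoly, eval_mul, eval_C] at hlegendre
  rw [assocLegendre, hpow, hlegendre, legendrePoly]

/-- The factor `√((N + 1/2) (N - m)! / (N + m)!)` relating `P̃_N^m` to `P_N^m`, up to
sign, with `N = k + m` so that no truncated subtraction occurs. -/
noncomputable def normalization (k m : ℕ) : ℝ :=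
  √((k + m + 1 / 2) * k ! / (k + 2 * m)!)

lemma normalization_sq (k m : ℕ) :
    normalization k m ^ 2 = (k + m + 1 / 2) * k ! / (k + 2 * m)! :=
  Real.sq_sqrt (by positivity)

lemma tildeP_eq (k m : ℕ) (x : ℝ) :
    tildeP (k + m) m x = normalization k m *
      ((1 - x ^ 2) ^ ((m : ℝ) / 2) * (derivative^[m] (legendrePoly (k + m))).eval x) := by
  have hsign : ((-1 : ℝ) ^ m) * (-1) ^ m = 1 := by rw [← mul_pow]; norm_num
  rw [tildeP, assocLegendre_eq, normalization, Nat.add_sub_cancel,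
    show k + m + m = k + 2 * m by ring, Nat.cast_add]
  linear_combination (√((k + m + 1 / 2) * k ! / (k + 2 * m)!) *
    ((1 - x ^ 2) ^ ((m : ℝ) / 2) * (derivative^[m] (legendrePoly (k + m))).eval x)) * hsign

lemma rpow_half_mul_rpow_half {y : ℝ} (hy : 0 ≤ y) {a b c : ℕ} (h : a + b = 2 * c) :
    y ^ ((a : ℝ) / 2) * y ^ ((b : ℝ) / 2) = y ^ c := by
  have hcast : (a : ℝ) + b = 2 * c := by exact_mod_cast h
  rw [← Real.rpow_add_of_nonneg hy (by positivity) (by positivity), ← Real.rpow_natCast]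
  congr 1
  linarith

lemma integral_tildeP_mul_tildeP (j k : ℕ) {a b c : ℕ} (h : a + b = 2 * c) :
    ∫ x in (-1 : ℝ)..1, tildeP (j + a) a x * tildeP (k + b) b x =
      normalization j a * normalization k b *
        polyIntegral ((1 - X ^ 2) ^ c * derivative^[a] (legendrePoly (j + a)) *
          derivative^[b] (legendrePoly (k + b))) := by
  rw [polyIntegral_apply, ← intervalIntegral.integral_const_mul]
  refine intervalIntegral.integral_congr fun x hx => ?_
  rw [Set.uIcc_of_le (by norm_num)] at hx
  have hweight : 0 ≤ 1 - x ^ 2 := by nlinarith [hx.1, hx.2]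
  simp only [tildeP_eq, eval_mul, eval_pow, eval_sub, eval_one, eval_X,
    ← rpow_half_mul_rpow_half hweight h]
  ring

lemma integral_tildeP_mul_self (k m : ℕ) :
    ∫ x in (-1 : ℝ)..1, tildeP (k + m) m x * tildeP (k + m) m x = 1 := by
  rw [integral_tildeP_mul_tildeP k k (two_mul m).symm,
    polyIntegral_weight_mul_iterate_derivative_legendrePoly_sq, ← sq, normalization_sq]
  field_simp

lemma integral_tildeP_mul_tildeP_add_two {m n ℓ : ℕ} (hln : ℓ ≤ n + 1) :
    ∫ x in (-1 : ℝ)..1, tildeP (ℓ + m) m x * tildeP (n + m + 2) (m + 2) x =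
      normalization ℓ m * normalization n (m + 2) *
        ((1 + (-1) ^ (ℓ + n)) * (2 * m + 2) * ((ℓ + 2 * m)! / ℓ !)) := by
  rw [← polyIntegral_weight_succ_mul_iterate_derivative_add_two hln]
  exact integral_tildeP_mul_tildeP ℓ n (show m + (m + 2) = 2 * (m + 1) by ring)

lemma sqrt_eq_normalization_div (m n ℓ : ℕ) :
    √(((ℓ + 2 * m)! / ((ℓ + m + 1 / 2) * ℓ !)) *
        ((n + m + 5 / 2) * n ! / (n + 2 * m + 4)!)) =
      normalization n (m + 2) / normalization ℓ m := by
  rw [normalization, normalization, ← Real.sqrt_div (by positivity),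
    show n + 2 * (m + 2) = n + 2 * m + 4 by ring]
  congr 1
  push_cast
  field_simp
  ring

lemma weight_mul_tildeP_div_weight {m : ℕ} (hm : m ≠ 0) (N : ℕ) (x : ℝ) :
    (1 - x ^ 2) * tildeP N m x / (1 - x ^ 2) = tildeP N m x := by
  -- At `x = ±1` the quotient is `0 / 0 = 0`, which is also the value of `tildeP N m` there.
  refine mul_div_cancel_left_of_imp fun hx => ?_
  rw [tildeP, assocLegendre, hx, Real.zero_rpow (by positivity)]
  ring

end LegendreConnection

open LegendreConnection in
theorem sph_connection_coefficient_general (m n ℓ : ℕ) (hln : ℓ ≤ n + 1) :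
    (1 + (-1) ^ (ℓ + n)) / 2 * ((2 * (ℓ : ℝ) + 2 * m + 1) * (2 * (m : ℝ) + 2) *
      Real.sqrt
        ((((ℓ + 2 * m)! : ℝ) / (((ℓ : ℝ) + m + 1 / 2) * (ℓ ! : ℝ))) *
          ((((n : ℝ) + m + 5 / 2) * (n ! : ℝ)) / ((n + 2 * m + 4)! : ℝ)))) =
    (∫ x in (-1 : ℝ)..1,
        tildeP (ℓ + m) m x * ((1 - x ^ 2) * tildeP (n + m + 2) (m + 2) x / (1 - x ^ 2))) /
      (∫ x in (-1 : ℝ)..1, tildeP (ℓ + m) m x * tildeP (ℓ + m) m x) := by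
  simp only [weight_mul_tildeP_div_weight (Nat.succ_ne_zero (m + 1))]
  rw [integral_tildeP_mul_self, div_one, integral_tildeP_mul_tildeP_add_two hln,
    sqrt_eq_normalization_div]
  have hne : normalization ℓ m ≠ 0 := by
    rw [normalization]
    positivity
  have hfactorial : ((ℓ + 2 * m)! : ℝ) / ℓ ! = (ℓ + m + 1 / 2) / normalization ℓ m ^ 2 := by
    rw [normalization_sq]
    field_simp
  rw [hfactorial]
  field_simp

/-- the explicit spherical harmonic connection coefficient equals the
expansion coefficient of `P̃_{n+m+2}^{m+2}` in the basis `{P̃_{ℓ+m}^m}`. -/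
theorem sph_connection_coefficient (m n ℓ : ℕ) (hln : ℓ ≤ n) (hpar : Even (ℓ + n)) :
    (2 * (ℓ : ℝ) + 2 * m + 1) * (2 * (m : ℝ) + 2) *
      Real.sqrt
        ((((ℓ + 2 * m)! : ℝ) / (((ℓ : ℝ) + m + 1 / 2) * (ℓ ! : ℝ))) *
          ((((n : ℝ) + m + 5 / 2) * (n ! : ℝ)) / ((n + 2 * m + 4)! : ℝ))) =
    (∫ x in (-1 : ℝ)..1,
        tildeP (ℓ + m) m x * ((1 - x ^ 2) * tildeP (n + m + 2) (m + 2) x / (1 - x ^ 2))) /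
      (∫ x in (-1 : ℝ)..1, tildeP (ℓ + m) m x * tildeP (ℓ + m) m x) := by
  simpa [hpar.neg_one_pow] using sph_connection_coefficient_general m n ℓ (hln.trans n.le_succ)
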